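/- Let 0 ≤ θ ≤ 1/4 and for P ≥ 2 put M = P^θ, H = P·M^{−4} and Q = P·M^{−1}. Then for every ε > 0 there exist η > 0 and C > 0 such that for all P ≥ 2 and all R with 1 ≤ R ≤ P^η one has ∫₀¹ |E₀(α)|²·|f₀(α;2Q)|⁴ dα ≤ C·Q^{5+ε}. -/

import Mathlib

open MeasureTheory
open scoped Classical

/-- `e(α) = exp(2πiα)`. -/
noncomputable def eC (α : ℝ) : ℂ := Complex.exp (2 * Real.pi * Complex.I * α)

/-- With `M = P^θ`, `H = P M⁻⁴`, the exponential sum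
`E₀(α) = ∑_{1≤h≤H} ∑_{1≤l≤2P} ∑_{M<m₁<m₂≤MR} e(8α l h³ (m₁⁸ − m₂⁸))`. -/
noncomputable def E0 (P θ R α : ℝ) : ℂ :=
  ∑ h ∈ Finset.Icc (1 : ℤ) ⌊P / (P ^ θ) ^ 4⌋,
    ∑ l ∈ Finset.Icc (1 : ℤ) ⌊2 * P⌋,
      ∑ m₂ ∈ Finset.Icc (⌊P ^ θ⌋ + 1) ⌊P ^ θ * R⌋,
        ∑ m₁ ∈ Finset.Icc (⌊P ^ θ⌋ + 1) (m₂ - 1),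
          eC (8 * α * (l : ℝ) * (h : ℝ) ^ 3 * ((m₁ : ℝ) ^ 8 - (m₂ : ℝ) ^ 8))

/-- The classical quartic Weyl sum `f_δ(α; P) = ∑_{δP < x ≤ P} e(αx⁴)`. -/
noncomputable def fW (δ P α : ℝ) : ℂ :=
  ∑ x ∈ Finset.Icc (⌊δ * P⌋ + 1) ⌊P⌋, eC (α * (x : ℝ) ^ 4)

lemma divisor_local (δ : ℝ) (hδ : 0 < δ) (p v : ℕ) (hp : 2 ≤ p) :
    ((v : ℝ) + 1) ≤ (if p < ⌈(2:ℝ) ^ (1/δ)⌉₊ then (1 + 2 / δ) else 1) * ((p:ℝ) ^ v) ^ δ := by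
  have hp' : (2:ℝ) ≤ p := by exact_mod_cast hp
  split_ifs with h
  · have h1 : (1 + v * δ / 2 : ℝ) ≤ ((p:ℝ) ^ v) ^ δ := by
      have h2 : ((2:ℝ) ^ v) ^ δ ≤ ((p:ℝ) ^ v) ^ δ := by gcongr
      refine le_trans ?_ h2
      rw [← Real.rpow_natCast, ← Real.rpow_mul (by norm_num), Real.rpow_def_of_pos (by norm_num)]
      have h3 := Real.add_one_le_exp (Real.log 2 * (v * δ))
      have h4 := Real.log_two_gt_d9
      have h5 : 0 ≤ (v:ℝ) * δ := by positivity
      nlinarith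
    calc (v:ℝ) + 1 ≤ (1 + 2/δ) * (1 + v * δ / 2) := by
          have : (1 + 2/δ) * (1 + v * δ / 2) = 1 + v + 2/δ + v * δ / 2 := by field_simp; ring
          rw [this]
          have : 0 ≤ 2/δ := by positivity
          have h5 : 0 ≤ (v:ℝ) * δ := by positivity
          linarith
      _ ≤ _ := by gcongr
  · push Not at h
    have h1 : (2:ℝ) ^ (1/δ) ≤ p := (Nat.le_ceil _).trans (by exact_mod_cast h)
    have h2 : (2:ℝ) ≤ (p:ℝ) ^ δ := by
      calc (2:ℝ) = ((2:ℝ) ^ (1/δ)) ^ δ := by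
            rw [← Real.rpow_mul (by norm_num)]; field_simp; simp
        _ ≤ _ := by gcongr
    rw [one_mul]
    have h3 : ((p:ℝ) ^ v) ^ δ = ((p:ℝ)^δ)^v := by
      rw [← Real.rpow_natCast, ← Real.rpow_natCast, ← Real.rpow_mul (by positivity), ← Real.rpow_mul (by positivity), mul_comm]
    rw [h3]
    calc (v:ℝ) + 1 ≤ 2 ^ v := by
          have := Nat.lt_two_pow_self (n := v)
          exact_mod_cast this
      _ ≤ _ := by gcongr

lemma divisor_bound (δ : ℝ) (hδ : 0 < δ) : ∃ K : ℝ, 1 ≤ K ∧ ∀ n : ℕ, n ≠ 0 →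
    (n.divisors.card : ℝ) ≤ K * (n:ℝ) ^ δ := by
  set B := ⌈(2:ℝ) ^ (1/δ)⌉₊ with hB
  have hA : (1:ℝ) ≤ 1 + 2 / δ := by
    have : 0 ≤ 2/δ := by positivity
    linarith
  refine ⟨(1 + 2/δ) ^ B, one_le_pow₀ hA, fun n hn => ?_⟩
  rw [Nat.card_divisors hn]
  push_cast
  calc ∏ x ∈ n.primeFactors, ((n.factorization x : ℝ) + 1)
      ≤ ∏ x ∈ n.primeFactors, ((if x < B then (1 + 2 / δ) else 1) * ((x:ℝ) ^ (n.factorization x)) ^ δ) := by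
        apply Finset.prod_le_prod
        · intros; positivity
        · intro p hp
          exact divisor_local δ hδ p _ (Nat.prime_of_mem_primeFactors hp).two_le
    _ = (1 + 2/δ) ^ (n.primeFactors.filter (· < B)).card * (n:ℝ)^δ := by
        rw [Finset.prod_mul_distrib, Finset.prod_ite]
        simp only [Finset.prod_const, one_pow, mul_one]
        congr 1
        rw [Real.finsetProd_rpow _ _ (by intros; positivity)]
        congr 1
        conv_rhs => rw [← Nat.prod_factorization_pow_eq_self hn]
        rw [Finsupp.prod]
        push_cast
        rfl
    _ ≤ _ := by
        gcongr
        · calc _ ≤ (Finset.range B).card := Finset.card_le_card (by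
                intro x hx; simp at hx ⊢; exact hx.2)
            _ = B := Finset.card_range B

lemma eC_int_integral (n : ℤ) : ∫ α in (0:ℝ)..1, eC (α * n) = if n = 0 then 1 else 0 := by
  split_ifs with h
  · simp [h, eC]
  · have hc : (2 * Real.pi * Complex.I * n : ℂ) ≠ 0 := by
      simp [h, Real.pi_ne_zero]
    have h1 : ∀ α : ℝ, eC (α * n) = Complex.exp ((2 * Real.pi * Complex.I * n) * α) := by
      intro α; unfold eC; congr 1; push_cast; ring
    simp_rw [h1]
    rw [integral_exp_mul_complex hc]
    have : Complex.exp (2 * Real.pi * Complex.I * n * (1:ℝ)) = 1 := by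
      rw [Complex.exp_eq_one_iff]; exact ⟨n, by push_cast; ring⟩
    rw [this]; simp

lemma eC_add (a b : ℝ) : eC (a + b) = eC a * eC b := by
  unfold eC; rw [← Complex.exp_add]; congr 1; push_cast; ring

lemma eC_conj (a : ℝ) : (starRingEnd ℂ) (eC a) = eC (-a) := by
  unfold eC; rw [← Complex.exp_conj]; congr 1; simp [Complex.conj_ofNat]

lemma eC_cont : Continuous eC := by unfold eC; fun_prop

lemma parseval {ι : Type*} (S : Finset ι) (g : ι → ℤ) :
    ∫ α in (0:ℝ)..1, ‖∑ s ∈ S, eC (α * g s)‖ ^ 2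
      = ∑ s ∈ S, ∑ t ∈ S, if g s = g t then (1:ℝ) else 0 := by
  have h1 : ∀ α : ℝ, (((‖∑ s ∈ S, eC (α * g s)‖ ^ 2 : ℝ)) : ℂ)
      = ∑ s ∈ S, ∑ t ∈ S, eC (α * ((g s - g t : ℤ))) := by
    intro α
    push_cast
    rw [← Complex.mul_conj', map_sum, Finset.sum_mul_sum]
    refine Finset.sum_congr rfl fun s _ => Finset.sum_congr rfl fun t _ => ?_
    rw [eC_conj, ← eC_add]; congr 1; ring
  have h2 := eC_cont
  apply Complex.ofReal_injective
  rw [← intervalIntegral.integral_ofReal]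
  simp_rw [h1]
  rw [intervalIntegral.integral_finsetSum (fun s _ => Continuous.intervalIntegrable (by fun_prop) _ _)]
  push_cast
  refine Finset.sum_congr rfl fun s _ => ?_
  rw [intervalIntegral.integral_finsetSum (fun s _ => Continuous.intervalIntegrable (by fun_prop) _ _)]
  refine Finset.sum_congr rfl fun t _ => ?_
  have := eC_int_integral (g s - g t)
  push_cast at this
  rw [this]
  simp only [sub_eq_zero]
  split_ifs <;> simp

/-- integer divisors -/
noncomputable def zdiv (n : ℤ) : Finset ℤ :=
  (n.natAbs.divisors.image (fun d : ℕ => (d:ℤ))) ∪ (n.natAbs.divisors.image (fun d : ℕ => -(d:ℤ)))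

lemma mem_zdiv {n k : ℤ} (hn : n ≠ 0) (h : k ∣ n) : k ∈ zdiv n := by
  have h1 : k.natAbs ∈ n.natAbs.divisors := by
    simp [Int.natAbs_dvd_natAbs, h, hn]
  unfold zdiv
  rw [Finset.mem_union, Finset.mem_image, Finset.mem_image]
  rcases Int.natAbs_eq k with hk | hk
  · left; exact ⟨_, h1, hk.symm⟩
  · right; exact ⟨_, h1, hk.symm⟩

lemma card_zdiv (n : ℤ) : (zdiv n).card ≤ 2 * n.natAbs.divisors.card := by
  unfold zdiv
  refine (Finset.card_union_le _ _).trans ?_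
  have := Finset.card_image_le (s := n.natAbs.divisors) (f := fun d : ℕ => (d:ℤ))
  have := Finset.card_image_le (s := n.natAbs.divisors) (f := fun d : ℕ => -(d:ℤ))
  omega

/-- quadruple counting -/
lemma quad_count (N : ℤ) (n : ℤ) (hn : n ≠ 0) :
    ((((Finset.Icc 1 N) ×ˢ (Finset.Icc 1 N)) ×ˢ ((Finset.Icc 1 N) ×ˢ (Finset.Icc 1 N))).filter
      (fun q : (ℤ × ℤ) × (ℤ × ℤ) => q.1.1 - q.1.2 = q.2.1 - q.2.2 ∧
        q.1.1 ^ 4 - q.1.2 ^ 4 - (q.2.1 ^ 4 - q.2.2 ^ 4) = n)).card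
      ≤ (2 * n.natAbs.divisors.card) ^ 2 := by
  have key : ∀ a b c d : ℤ, a - b = c - d → a ^ 4 - b ^ 4 - (c ^ 4 - d ^ 4)
      = (a - b) * ((a - c) * (3 * (a + d) ^ 2 + (a-b)^2 + (a-c)^2)) := by
    intro a b c d h
    obtain rfl : d = c - a + b := by linarith
    ring
  calc _ ≤ ((zdiv n) ×ˢ (zdiv n)).card := by
        apply Finset.card_le_card_of_injOn (fun q => (q.1.1 - q.1.2, q.1.1 - q.2.1))
        · rintro ⟨⟨a, b⟩, ⟨c, d⟩⟩ hq
          simp only [Finset.coe_filter, Set.mem_ofPred_eq] at hq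
          obtain ⟨_, h1, h2⟩ := hq
          rw [key a b c d h1] at h2
          simp only [Finset.coe_product, Set.mem_prod, Finset.mem_coe]
          exact ⟨mem_zdiv hn ⟨_, h2.symm⟩, mem_zdiv hn ⟨(a - b) * (3 * (a + d) ^ 2 + (a-b)^2 + (a-c)^2), by rw [← h2]; ring⟩⟩
        · rintro ⟨⟨a, b⟩, ⟨c, d⟩⟩ hq ⟨⟨a', b'⟩, ⟨c', d'⟩⟩ hq' he
          simp only [Finset.coe_filter, Set.mem_ofPred_eq, Finset.mem_product, Finset.mem_Icc] at hq hq'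
          obtain ⟨hI, h1, h2⟩ := hq
          obtain ⟨hI', h1', h2'⟩ := hq'
          simp only [Prod.mk.injEq] at he
          obtain ⟨e1, e2⟩ := he
          rw [key a b c d h1] at h2
          rw [key a' b' c' d' h1', ← e1, ← e2, ← h2] at h2'
          have n1 : a - b ≠ 0 := by rintro h; apply hn; rw [← h2, h]; ring
          have n2 : a - c ≠ 0 := by rintro h; apply hn; rw [← h2, h]; ring
          have h3 := mul_left_cancel₀ n2 (mul_left_cancel₀ n1 h2')
          have h4 : (a' + d') ^ 2 = (a + d) ^ 2 := by linarith
          have h5 : a' + d' = a + d := by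
            rw [sq_eq_sq_iff_abs_eq_abs, abs_of_pos (by omega), abs_of_pos (by omega)] at h4
            exact h4
          simp only [Prod.mk.injEq]
          omega
    _ ≤ _ := by
        rw [Finset.card_product, sq]
        exact Nat.mul_le_mul (card_zdiv n) (card_zdiv n)

/-- the quadruples -/
noncomputable def quads (N n : ℤ) : Finset ((ℤ × ℤ) × (ℤ × ℤ)) :=
  (((Finset.Icc 1 N) ×ˢ (Finset.Icc 1 N)) ×ˢ ((Finset.Icc 1 N) ×ˢ (Finset.Icc 1 N))).filter
      (fun q : (ℤ × ℤ) × (ℤ × ℤ) => q.1.1 - q.1.2 = q.2.1 - q.2.2 ∧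
        q.1.1 ^ 4 - q.1.2 ^ 4 - (q.2.1 ^ 4 - q.2.2 ^ 4) = n)

lemma quad_zero (N : ℤ) (hN : 0 ≤ N) : ((quads N 0).card : ℝ) ≤ 2 * (N:ℝ) ^ 2 := by
  have key : ∀ a b c d : ℤ, a - b = c - d → a ^ 4 - b ^ 4 - (c ^ 4 - d ^ 4)
      = (a - b) * ((a - c) * (3 * (a + d) ^ 2 + (a-b)^2 + (a-c)^2)) := by
    intro a b c d h
    obtain rfl : d = c - a + b := by linarith
    ring
  set I := (Finset.Icc 1 N) ×ˢ (Finset.Icc 1 N) with hI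
  have hIc : (I.card : ℝ) = (N:ℝ) ^ 2 := by
    rw [hI, Finset.card_product, Int.card_Icc]
    have : (((N + 1 - 1).toNat : ℤ) : ℝ) = (N:ℝ) := by
      congr 1; omega
    push_cast at this ⊢
    rw [sq]; congr 1 
  have hsub : quads N 0 ⊆ I.image (fun p : ℤ × ℤ => ((p.1, p.1), (p.2, p.2))) ∪
      I.image (fun p : ℤ × ℤ => ((p.1, p.2), (p.1, p.2))) := by
    rintro ⟨⟨a, b⟩, ⟨c, d⟩⟩ hq
    simp only [quads, Finset.mem_filter, Finset.mem_product, Finset.mem_Icc] at hq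
    obtain ⟨hm, h1, h2⟩ := hq
    rw [key a b c d h1] at h2
    have h3 : 0 < 3 * (a + d) ^ 2 + (a-b)^2 + (a-c)^2 := by
      have : 0 < a + d := by omega
      positivity
    rw [Finset.mem_union, Finset.mem_image, Finset.mem_image]
    rcases mul_eq_zero.1 h2 with h | h
    · left; refine ⟨(a, c), ?_, ?_⟩
      · simp [hI]; omega
      · simp; omega
    · rcases mul_eq_zero.1 h with h | h
      · right; refine ⟨(a, b), ?_, ?_⟩
        · simp [hI]; omega
        · simp; omega
      · omega
  have h1 := (Finset.card_le_card hsub).trans (Finset.card_union_le _ _)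
  have h2 := Finset.card_image_le (s := I) (f := fun p : ℤ × ℤ => ((p.1, p.1), (p.2, p.2)))
  have h3 := Finset.card_image_le (s := I) (f := fun p : ℤ × ℤ => ((p.1, p.2), (p.1, p.2)))
  rw [← hIc]
  have : (quads N 0).card ≤ 2 * I.card := by omega
  exact_mod_cast this

/-- fibre of pairs -/
noncomputable def prs (N k : ℤ) : Finset (ℤ × ℤ) :=
  ((Finset.Icc 1 N) ×ˢ (Finset.Icc 1 N)).filter (fun p => p.1 - p.2 = k)

lemma quad_sum (N n : ℤ) :
    (∑ k ∈ Finset.Icc (-N) N, ∑ p ∈ prs N k, ∑ q ∈ prs N k,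
      if p.1 ^ 4 - p.2 ^ 4 - (q.1 ^ 4 - q.2 ^ 4) = n then (1:ℝ) else 0) = (quads N n).card := by
  set I := (Finset.Icc 1 N) ×ˢ (Finset.Icc 1 N) with hI
  have h1 : ∀ k ∈ Finset.Icc (-N) N, (∑ p ∈ prs N k, ∑ q ∈ prs N k,
      if p.1 ^ 4 - p.2 ^ 4 - (q.1 ^ 4 - q.2 ^ 4) = n then (1:ℝ) else 0)
      = ∑ p ∈ I.filter (fun p => p.1 - p.2 = k), ∑ q ∈ I,
        if p.1 - p.2 = q.1 - q.2 ∧ p.1 ^ 4 - p.2 ^ 4 - (q.1 ^ 4 - q.2 ^ 4) = n then (1:ℝ) else 0 := by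
    intro k _
    refine Finset.sum_congr rfl fun p hp => ?_
    have hp' : p.1 - p.2 = k := (Finset.mem_filter.1 hp).2
    rw [prs, ← hI, Finset.sum_filter]
    refine Finset.sum_congr rfl fun q _ => ?_
    rw [hp', ite_and]
    simp [eq_comm]
  rw [Finset.sum_congr rfl h1, Finset.sum_fiberwise_of_maps_to, quads, Finset.card_filter,
    ← hI]
  · push_cast
    rw [Finset.sum_product (s := I) (t := I)]
  · intro p hp
    simp [hI] at hp ⊢
    omega

lemma cs_pointwise (N : ℤ) (hN : 0 ≤ N) (α : ℝ) :
    ‖∑ x ∈ Finset.Icc (1:ℤ) N, eC (α * (x:ℝ) ^ 4)‖ ^ 4 ≤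
      (2 * N + 1) * ∑ k ∈ Finset.Icc (-N) N,
        ‖∑ p ∈ prs N k, eC (α * ((p.1 ^ 4 - p.2 ^ 4 : ℤ)))‖ ^ 2 := by
  set F := ∑ x ∈ Finset.Icc (1:ℤ) N, eC (α * (x:ℝ) ^ 4) with hF
  have h1 : F * (starRingEnd ℂ) F = ∑ k ∈ Finset.Icc (-N) N,
      ∑ p ∈ prs N k, eC (α * ((p.1 ^ 4 - p.2 ^ 4 : ℤ))) := by
    unfold prs
    rw [Finset.sum_fiberwise_of_maps_to, hF, map_sum, Finset.sum_mul_sum, Finset.sum_product]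
    · refine Finset.sum_congr rfl fun s _ => Finset.sum_congr rfl fun t _ => ?_
      rw [eC_conj, ← eC_add]; congr 1; push_cast; ring
    · intro p hp
      simp at hp ⊢
      omega
  have h2 : ‖F‖ ^ 4 = ‖F * (starRingEnd ℂ) F‖ ^ 2 := by
    rw [norm_mul, RCLike.norm_conj]; ring
  rw [h2, h1]
  have h3 : ((Finset.Icc (-N) N).card : ℝ) = 2 * N + 1 := by
    rw [Int.card_Icc]
    have : (((N + 1 - -N).toNat : ℤ) : ℝ) = ((2 * N + 1 : ℤ):ℝ) := by
      congr 1; omega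
    push_cast at this ⊢
    exact this
  rw [← h3]
  refine le_trans ?_ (sq_sum_le_card_mul_sum_sq)
  gcongr
  exact norm_sum_le _ _

lemma mean_value {ι : Type*} (S : Finset ι) (g : ι → ℤ) (N : ℤ) (hN : 0 ≤ N) (D₁ D₂ : ℝ)
    (h1 : ∀ s ∈ S, ((S.filter (fun t => g t = g s)).card : ℝ) ≤ D₁)
    (h2 : ∀ n : ℤ, n ≠ 0 → ((quads N n).card : ℝ) ≤ D₂) :
    ∫ α in (0:ℝ)..1, ‖∑ s ∈ S, eC (α * g s)‖ ^ 2 *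
        ‖∑ x ∈ Finset.Icc (1:ℤ) N, eC (α * (x:ℝ) ^ 4)‖ ^ 4
      ≤ (2 * N + 1) * (S.card * (2 * (N:ℝ) ^ 2 * D₁ + S.card * D₂)) := by
  have hc := eC_cont
  have hN' : (0:ℝ) ≤ N := by exact_mod_cast hN
  have hD₂ : 0 ≤ D₂ := le_trans (by positivity) (h2 1 one_ne_zero)
  let G : ι × (ℤ × ℤ) → ℤ := fun u => g u.1 + (u.2.1 ^ 4 - u.2.2 ^ 4)
  calc _ ≤ ∫ α in (0:ℝ)..1, (2 * N + 1) * ∑ k ∈ Finset.Icc (-N) N,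
        ‖∑ u ∈ S ×ˢ prs N k, eC (α * G u)‖ ^ 2 := by
        apply intervalIntegral.integral_mono_on (by norm_num)
        · exact Continuous.intervalIntegrable (by fun_prop) _ _
        · exact Continuous.intervalIntegrable (by fun_prop) _ _
        · intro α _
          calc _ ≤ ‖∑ s ∈ S, eC (α * g s)‖ ^ 2 * ((2 * N + 1) * ∑ k ∈ Finset.Icc (-N) N,
                ‖∑ p ∈ prs N k, eC (α * ((p.1 ^ 4 - p.2 ^ 4 : ℤ)))‖ ^ 2) := by
                gcongr
                exact cs_pointwise N hN α
            _ = (2 * N + 1) * ∑ k ∈ Finset.Icc (-N) N, (‖∑ s ∈ S, eC (α * g s)‖ ^ 2 *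
                ‖∑ p ∈ prs N k, eC (α * ((p.1 ^ 4 - p.2 ^ 4 : ℤ)))‖ ^ 2) := by
                rw [← Finset.mul_sum]; ring
            _ = _ := by
                congr 1
                refine Finset.sum_congr rfl fun k _ => ?_
                rw [← mul_pow, ← norm_mul, Finset.sum_mul_sum, Finset.sum_product]
                congr 2
                refine Finset.sum_congr rfl fun s _ => Finset.sum_congr rfl fun t _ => ?_
                rw [← eC_add]; congr 1; simp only [G]; push_cast; ring
    _ = (2 * N + 1) * ∑ k ∈ Finset.Icc (-N) N, ∑ u ∈ S ×ˢ prs N k, ∑ v ∈ S ×ˢ prs N k,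
          if G u = G v then (1:ℝ) else 0 := by
        rw [intervalIntegral.integral_const_mul, intervalIntegral.integral_finsetSum
          (fun s _ => Continuous.intervalIntegrable (by fun_prop) _ _)]
        simp_rw [parseval]
    _ = (2 * N + 1) * ∑ s ∈ S, ∑ t ∈ S, ((quads N (g t - g s)).card : ℝ) := by
        congr 1
        simp_rw [← quad_sum, Finset.sum_product]
        rw [Finset.sum_comm]
        refine Finset.sum_congr rfl fun s _ => ?_
        conv_rhs => rw [Finset.sum_comm]
        refine Finset.sum_congr rfl fun k _ => ?_
        rw [Finset.sum_comm]
        refine Finset.sum_congr rfl fun t _ => ?_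
        refine Finset.sum_congr rfl fun p _ => Finset.sum_congr rfl fun q _ => ?_
        congr 1
        simp only [G, eq_iff_iff]
        constructor <;> intro h <;> linarith
    _ ≤ (2 * N + 1) * ∑ s ∈ S, (2 * (N:ℝ) ^ 2 * D₁ + S.card * D₂) := by
        gcongr with s hs
        calc _ ≤ ∑ t ∈ S, ((if g t = g s then 2 * (N:ℝ) ^ 2 else 0) + D₂) := by
              gcongr with t ht
              split_ifs with h
              · rw [h, sub_self]
                have := quad_zero N hN
                linarith
              · rw [zero_add]; exact h2 _ (sub_ne_zero.2 h)
          _ = (S.filter (fun t => g t = g s)).card * (2 * (N:ℝ) ^ 2) + S.card * D₂ := by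
              rw [Finset.sum_add_distrib, ← Finset.sum_filter]; simp
          _ ≤ _ := by
              have := h1 s hs
              nlinarith [sq_nonneg (N:ℝ)]
    _ = _ := by rw [Finset.sum_const, nsmul_eq_mul]

/-- the phase of `E₀`, on tuples `(h, l, m₂, m₁)` -/
def gph (q : ℤ × ℤ × ℤ × ℤ) : ℤ := 8 * q.2.1 * q.1 ^ 3 * (q.2.2.2 ^ 8 - q.2.2.1 ^ 8)

/-- index set of `E₀` -/
noncomputable def idx (A B m M : ℤ) : Finset (ℤ × ℤ × ℤ × ℤ) :=
  ((Finset.Icc 1 A) ×ˢ (Finset.Icc 1 B) ×ˢ (Finset.Icc (m + 1) M) ×ˢ (Finset.Icc (m + 1) M)).filter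
    (fun q => q.2.2.2 < q.2.2.1)

lemma E0_eq (P θ R α : ℝ) : E0 P θ R α =
    ∑ q ∈ idx ⌊P / (P ^ θ) ^ 4⌋ ⌊2 * P⌋ ⌊P ^ θ⌋ ⌊P ^ θ * R⌋, eC (α * gph q) := by
  unfold E0 idx
  rw [Finset.sum_filter, Finset.sum_product]
  refine Finset.sum_congr rfl fun h _ => ?_
  rw [Finset.sum_product]
  refine Finset.sum_congr rfl fun l _ => ?_
  rw [Finset.sum_product]
  refine Finset.sum_congr rfl fun m₂ hm => ?_
  rw [← Finset.sum_filter]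
  have : (Finset.Icc (⌊P ^ θ⌋ + 1) ⌊P ^ θ * R⌋).filter (fun a => a < m₂)
      = Finset.Icc (⌊P ^ θ⌋ + 1) (m₂ - 1) := by
    ext a
    simp only [Finset.mem_filter, Finset.mem_Icc] at hm ⊢
    omega
  simp only
  rw [this]
  refine Finset.sum_congr rfl fun m₁ _ => ?_
  congr 1
  simp only [gph]
  push_cast
  ring

lemma gph_ne (A B m M : ℤ) (hm : 0 ≤ m) (q) (hq : q ∈ idx A B m M) : gph q ≠ 0 := by
  obtain ⟨h, l, m₂, m₁⟩ := q
  simp only [idx, Finset.mem_filter, Finset.mem_product, Finset.mem_Icc] at hq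
  simp only [gph]
  have h1 : m₁ ^ 8 < m₂ ^ 8 := pow_lt_pow_left₀ (by omega) (by omega) (by norm_num)
  have h2 : h ≠ 0 := by omega
  have h3 : l ≠ 0 := by omega
  have h4 : m₁ ^ 8 - m₂ ^ 8 ≠ 0 := by omega
  positivity

lemma mult_count (A B m M : ℤ) (hm : 0 ≤ m) (v : ℤ) (hv : v ≠ 0) :
    ((idx A B m M).filter (fun t => gph t = v)).card ≤ (2 * v.natAbs.divisors.card) ^ 4 := by
  calc _ ≤ ((zdiv v) ×ˢ (zdiv v) ×ˢ (zdiv v) ×ˢ (zdiv v)).card := by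
        apply Finset.card_le_card_of_injOn
          (fun q => (q.1, q.2.1, q.2.2.2 - q.2.2.1, q.2.2.2 + q.2.2.1))
        · rintro ⟨h, l, m₂, m₁⟩ hq
          replace hq := (Finset.mem_filter.1 (Finset.mem_coe.1 hq)).2
          simp only [gph] at hq
          simp only [Finset.coe_product, Set.mem_prod, Finset.mem_coe]
          refine ⟨mem_zdiv hv ⟨8 * l * h ^ 2 * (m₁ ^ 8 - m₂ ^ 8), by rw [← hq]; ring⟩,
            mem_zdiv hv ⟨8 * h ^ 3 * (m₁ ^ 8 - m₂ ^ 8), by rw [← hq]; ring⟩,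
            mem_zdiv hv ⟨8 * l * h ^ 3 * ((m₁ + m₂) * (m₁ ^ 2 + m₂ ^ 2) * (m₁ ^ 4 + m₂ ^ 4)), by rw [← hq]; ring⟩,
            mem_zdiv hv ⟨8 * l * h ^ 3 * ((m₁ - m₂) * (m₁ ^ 2 + m₂ ^ 2) * (m₁ ^ 4 + m₂ ^ 4)), by rw [← hq]; ring⟩⟩
        · rintro ⟨h, l, m₂, m₁⟩ _ ⟨h', l', m₂', m₁'⟩ _ he
          simp only [Prod.mk.injEq] at he ⊢
          omega
    _ ≤ _ := by
        rw [Finset.card_product, Finset.card_product, Finset.card_product]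
        have := card_zdiv v
        calc _ = (zdiv v).card ^ 4 := by ring
          _ ≤ _ := Nat.pow_le_pow_left this 4

lemma card_Icc_le (a b : ℤ) (x : ℝ) (ha : 0 ≤ a) (hx : 0 ≤ x) (hb : (b:ℝ) ≤ x) :
    ((Finset.Icc (a + 1) b).card : ℝ) ≤ x := by
  rw [Int.card_Icc]
  rcases le_total (b + 1 - (a + 1)) 0 with h | h
  · rw [Int.toNat_of_nonpos h]; simpa
  · have : (((b + 1 - (a + 1)).toNat : ℤ) : ℝ) ≤ (b : ℝ) := by
      rw [Int.toNat_of_nonneg h]; exact_mod_cast (by omega)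
    push_cast at this
    linarith

lemma idx_card (A B m M : ℤ) (a b c : ℝ) (hm : 0 ≤ m) (ha : 0 ≤ a) (hb : 0 ≤ b) (hc : 0 ≤ c)
    (hA : (A:ℝ) ≤ a) (hB : (B:ℝ) ≤ b) (hM : (M:ℝ) ≤ c) :
    ((idx A B m M).card : ℝ) ≤ a * b * c ^ 2 := by
  have h1 : (idx A B m M).card ≤ _ := Finset.card_filter_le _ _
  have h2 : ((idx A B m M).card : ℝ) ≤ _ := Nat.cast_le.2 h1
  refine h2.trans ?_
  rw [Finset.card_product, Finset.card_product, Finset.card_product]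
  have e1 := card_Icc_le 0 A a le_rfl ha hA
  have e2 := card_Icc_le 0 B b le_rfl hb hB
  have e3 := card_Icc_le m M c hm hc hM
  rw [zero_add] at e1 e2
  push_cast
  calc _ ≤ a * (b * (c * c)) := by gcongr
    _ = _ := by ring

lemma gph_le (A B m M : ℤ) (a b c : ℝ) (hm : 0 ≤ m) (ha : 0 ≤ a) (hb : 0 ≤ b) (hc : 0 ≤ c)
    (hA : (A:ℝ) ≤ a) (hB : (B:ℝ) ≤ b) (hM : (M:ℝ) ≤ c) (q) (hq : q ∈ idx A B m M) :
    ((gph q).natAbs : ℝ) ≤ 8 * b * a ^ 3 * c ^ 8 := by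
  obtain ⟨h, l, m₂, m₁⟩ := q
  simp only [idx, Finset.mem_filter, Finset.mem_product, Finset.mem_Icc] at hq
  obtain ⟨⟨hh, hl, hm2, hm1⟩, hlt⟩ := hq
  rw [Nat.cast_natAbs]
  have h1 : m₁ ^ 8 < m₂ ^ 8 := pow_lt_pow_left₀ (by omega) (by omega) (by norm_num)
  have h0 : (0:ℤ) ≤ m₁ ^ 8 := by positivity
  have h2 : |gph (h, l, m₂, m₁)| ≤ 8 * l * h ^ 3 * m₂ ^ 8 := by
    simp only [gph]
    have hl0 : 0 ≤ l := by omega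
    have hh0 : 0 ≤ h := by omega
    rw [abs_mul, abs_of_nonneg (a := 8 * l * h ^ 3) (by positivity), abs_of_neg (by omega)]
    gcongr
    omega
  have h3 : ((|gph (h, l, m₂, m₁)| : ℤ) : ℝ) ≤ ((8 * l * h ^ 3 * m₂ ^ 8 : ℤ) : ℝ) := by
    exact_mod_cast h2
  refine h3.trans ?_
  push_cast
  have e1 : (h:ℝ) ≤ a := le_trans (by exact_mod_cast hh.2) hA
  have e2 : (l:ℝ) ≤ b := le_trans (by exact_mod_cast hl.2) hB
  have e3 : (m₂:ℝ) ≤ c := le_trans (by exact_mod_cast hm2.2) hM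
  have f1 : (0:ℝ) ≤ h := by exact_mod_cast (by omega)
  have f2 : (0:ℝ) ≤ l := by exact_mod_cast (by omega)
  have f3 : (0:ℝ) ≤ m₂ := by exact_mod_cast (by omega)
  gcongr

lemma quads_le (N n : ℤ) (hn : n ≠ 0) (x Y : ℝ) (hx : (N:ℝ) ≤ x) (hY : 0 ≤ Y)
    (hd : ∀ k : ℕ, k ≠ 0 → (k:ℝ) ≤ 2 * x ^ 4 → (k.divisors.card : ℝ) ≤ Y) :
    ((quads N n).card : ℝ) ≤ (2 * Y) ^ 2 := by
  rcases (quads N n).eq_empty_or_nonempty with h | ⟨⟨⟨a, b⟩, ⟨c, d⟩⟩, hq⟩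
  · rw [h]; simp; positivity
  · have h1 : ((quads N n).card : ℝ) ≤ _ := Nat.cast_le.2 (quad_count N n hn)
    refine h1.trans ?_
    push_cast
    simp only [quads, Finset.mem_filter, Finset.mem_product, Finset.mem_Icc] at hq
    obtain ⟨⟨⟨ha, hb⟩, hc, hd'⟩, _, he⟩ := hq
    have hN : (0:ℤ) ≤ N := by omega
    have h2 : (n.natAbs : ℝ) ≤ 2 * x ^ 4 := by
      have a1 : a ^ 4 ≤ N ^ 4 := pow_le_pow_left₀ (by omega) ha.2 4
      have b1 : b ^ 4 ≤ N ^ 4 := pow_le_pow_left₀ (by omega) hb.2 4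
      have c1 : c ^ 4 ≤ N ^ 4 := pow_le_pow_left₀ (by omega) hc.2 4
      have d1 : d ^ 4 ≤ N ^ 4 := pow_le_pow_left₀ (by omega) hd'.2 4
      have a2 : 0 ≤ a ^ 4 := by positivity
      have b2 : 0 ≤ b ^ 4 := by positivity
      have c2 : 0 ≤ c ^ 4 := by positivity
      have d2 : 0 ≤ d ^ 4 := by positivity
      have h3 : |n| ≤ 2 * N ^ 4 := by
        rw [abs_le]; omega
      rw [Nat.cast_natAbs]
      have h4 : ((|n| : ℤ) : ℝ) ≤ ((2 * N ^ 4 : ℤ) : ℝ) := by exact_mod_cast h3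
      refine h4.trans ?_
      push_cast
      have : (0:ℝ) ≤ N := by exact_mod_cast hN
      gcongr
    have := hd _ (Int.natAbs_ne_zero.2 hn) h2
    gcongr

lemma combine (P θ R Q Y : ℝ) (hP : 2 ≤ P) (hR : 1 ≤ R) (hY : 1 ≤ Y) (hQ : Q = P / P ^ θ) (hQ1 : 1 ≤ Q)
    (hd : ∀ k : ℕ, k ≠ 0 → (k:ℝ) ≤ 32 * Q ^ 4 * R ^ 8 → (k.divisors.card : ℝ) ≤ Y) :
    (∫ α in (0:ℝ)..1, ‖E0 P θ R α‖ ^ 2 * ‖fW 0 (2 * Q) α‖ ^ 4)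
      ≤ 1360 * Q ^ 5 * R ^ 4 * Y ^ 4 := by
  set M := P ^ θ with hM
  have hM0 : 0 < M := by positivity
  have hP0 : 0 < P := by positivity
  have hPQ : P = Q * M := by rw [hQ]; field_simp
  have hfl : (0:ℤ) ≤ ⌊M⌋ := Int.floor_nonneg.2 hM0.le
  have hN0 : (0:ℤ) ≤ ⌊2 * Q⌋ := Int.floor_nonneg.2 (by positivity)
  set S := idx ⌊P / M ^ 4⌋ ⌊2 * P⌋ ⌊M⌋ ⌊M * R⌋ with hS
  have hScard : (S.card : ℝ) ≤ 2 * Q ^ 2 * R ^ 2 := by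
    have := idx_card ⌊P / M ^ 4⌋ ⌊2 * P⌋ ⌊M⌋ ⌊M * R⌋ (P / M ^ 4) (2 * P) (M * R) hfl
      (by positivity) (by positivity) (by positivity) (Int.floor_le _) (Int.floor_le _) (Int.floor_le _)
    refine this.trans (le_of_eq ?_)
    rw [hPQ]; field_simp
  have hR8 : (1:ℝ) ≤ R ^ 8 := one_le_pow₀ hR
  have key := mean_value S gph ⌊2 * Q⌋ hN0 ((2 * Y) ^ 4) ((2 * Y) ^ 2) (by
    intro s hs
    have hne := gph_ne _ _ _ _ hfl s hs
    have h1 : (((S.filter (fun t => gph t = gph s)).card : ℕ) : ℝ) ≤ _ :=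
      Nat.cast_le.2 (mult_count _ _ _ _ hfl (gph s) hne)
    refine h1.trans ?_
    push_cast
    have h2 := gph_le ⌊P / M ^ 4⌋ ⌊2 * P⌋ ⌊M⌋ ⌊M * R⌋ (P / M ^ 4) (2 * P) (M * R) hfl
      (by positivity) (by positivity) (by positivity) (Int.floor_le _) (Int.floor_le _) (Int.floor_le _) s hs
    have h3 : 8 * (2 * P) * (P / M ^ 4) ^ 3 * (M * R) ^ 8 = 16 * Q ^ 4 * R ^ 8 := by
      rw [hPQ]; field_simp; ring
    rw [h3] at h2
    have h4 := hd _ (Int.natAbs_ne_zero.2 hne) (h2.trans (by gcongr; norm_num))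
    clear hPQ hQ
    gcongr) (by
    intro n hn
    refine quads_le _ n hn (2 * Q) Y (Int.floor_le _) (by positivity) ?_
    intro k hk hk'
    apply hd k hk
    refine hk'.trans ?_
    have : 0 < Q ^ 4 := by positivity
    nlinarith)
  have hint : (∫ α in (0:ℝ)..1, ‖E0 P θ R α‖ ^ 2 * ‖fW 0 (2 * Q) α‖ ^ 4)
      = ∫ α in (0:ℝ)..1, ‖∑ s ∈ S, eC (α * gph s)‖ ^ 2 *
        ‖∑ x ∈ Finset.Icc (1:ℤ) ⌊2 * Q⌋, eC (α * (x:ℝ) ^ 4)‖ ^ 4 := by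
    refine intervalIntegral.integral_congr fun α _ => ?_
    simp only [E0_eq, fW, zero_mul, Int.floor_zero, zero_add]
    rfl
  rw [hint]
  refine key.trans ?_
  have hN1 : ((⌊2 * Q⌋ : ℤ) : ℝ) ≤ 2 * Q := Int.floor_le _
  have hN2 : (0:ℝ) ≤ ((⌊2 * Q⌋ : ℤ) : ℝ) := by exact_mod_cast hN0
  have hR2 : (1:ℝ) ≤ R ^ 2 := one_le_pow₀ hR
  have hY2 : Y ^ 2 ≤ Y ^ 4 := pow_le_pow_right₀ hY (by norm_num)
  calc _ ≤ (2 * (2 * Q) + Q) * ((2 * Q ^ 2 * R ^ 2) * (2 * (2 * Q) ^ 2 * (2 * Y) ^ 4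
        + (2 * Q ^ 2 * R ^ 2) * (2 * Y) ^ 2)) := by
        clear hPQ hQ
        gcongr
    _ = 1280 * Q ^ 5 * R ^ 2 * Y ^ 4 * 1 + 80 * Q ^ 5 * R ^ 4 * Y ^ 2 := by ring
    _ ≤ 1280 * Q ^ 5 * R ^ 2 * Y ^ 4 * R ^ 2 + 80 * Q ^ 5 * R ^ 4 * Y ^ 4 := by gcongr
    _ = _ := by ring

theorem stmt4 (θ : ℝ) (hθ0 : 0 ≤ θ) (hθ1 : θ ≤ 1 / 4) :
    ∀ ε > (0 : ℝ), ∃ η > (0 : ℝ), ∃ C > (0 : ℝ),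
      ∀ P : ℝ, 2 ≤ P → ∀ R : ℝ, 1 ≤ R → R ≤ P ^ η →
        (∫ α in (0:ℝ)..1, ‖E0 P θ R α‖ ^ 2 * ‖fW 0 (2 * (P / P ^ θ)) α‖ ^ 4)
          ≤ C * (P / P ^ θ) ^ ((5 : ℝ) + ε) := by
  intro ε hε
  obtain ⟨K, hK1, hK⟩ := divisor_bound (ε / 32) (by positivity)
  refine ⟨ε / (4 * (4 + ε)), by positivity, 1360 * K ^ 4 * (32:ℝ) ^ (ε / 8), by positivity, ?_⟩
  intro P hP R hR hRP
  have hP0 : 0 < P := by positivity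
  have hQe : P / P ^ θ = P ^ (1 - θ) := by rw [Real.rpow_sub hP0, Real.rpow_one]
  set Q := P / P ^ θ with hQ
  have hQ1 : 1 ≤ Q := by rw [hQe]; exact Real.one_le_rpow (by linarith) (by linarith)
  have hQ0 : 0 < Q := by linarith
  have hR0 : 0 < R := by linarith
  have hPQ : P ≤ Q ^ (2:ℝ) := by
    rw [hQe, ← Real.rpow_mul hP0.le]
    calc P = P ^ (1:ℝ) := (Real.rpow_one P).symm
      _ ≤ _ := Real.rpow_le_rpow_of_exponent_le (by linarith) (by linarith)
  set X := 32 * Q ^ 4 * R ^ 8 with hX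
  have hX1 : 1 ≤ X := by
    have h1 : 1 ≤ Q ^ 4 := one_le_pow₀ hQ1
    have h2 : 1 ≤ R ^ 8 := one_le_pow₀ hR
    rw [hX]; nlinarith [one_le_mul_of_one_le_of_one_le h1 h2]
  have hXd : (1:ℝ) ≤ X ^ (ε / 32) := Real.one_le_rpow hX1 (by positivity)
  have := combine P θ R Q (K * X ^ (ε / 32)) hP hR (by nlinarith) hQ hQ1 (by
    intro k hk hkX
    refine (hK k hk).trans ?_
    gcongr)
  refine this.trans ?_
  have hY : (K * X ^ (ε / 32)) ^ 4 = K ^ 4 * ((32:ℝ) ^ (ε / 8) * Q ^ (ε / 2) * R ^ ε) := by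
    rw [mul_pow]
    congr 1
    rw [← Real.rpow_natCast, ← Real.rpow_mul (by positivity), hX, Real.mul_rpow (by positivity) (by positivity),
      Real.mul_rpow (by positivity) (by positivity), ← Real.rpow_natCast Q, ← Real.rpow_natCast R,
      ← Real.rpow_mul hQ0.le, ← Real.rpow_mul hR0.le]
    congr 2
    · congr 1; push_cast; ring
    · congr 1; push_cast; ring
    · push_cast; ring
  have hRb : R ^ (4:ℕ) * R ^ ε ≤ Q ^ (ε / 2) := by
    calc R ^ (4:ℕ) * R ^ ε = R ^ (4 + ε) := by
          rw [Real.rpow_add hR0]; norm_cast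
      _ ≤ (P ^ (ε / (4 * (4 + ε)))) ^ (4 + ε) := by gcongr
      _ = P ^ (ε / 4) := by
          rw [← Real.rpow_mul hP0.le]; congr 1; field_simp
      _ ≤ (Q ^ (2:ℝ)) ^ (ε / 4) := by gcongr
      _ = _ := by rw [← Real.rpow_mul hQ0.le]; congr 1; ring
  have hQf : Q ^ ((5:ℝ) + ε) = Q ^ (5:ℕ) * (Q ^ (ε / 2) * Q ^ (ε / 2)) := by
    rw [← Real.rpow_add hQ0, add_halves, Real.rpow_add hQ0]; norm_cast
  rw [hY, hQf]
  calc _ = 1360 * K ^ 4 * (32:ℝ) ^ (ε / 8) * (Q ^ 5 * (Q ^ (ε / 2) * (R ^ 4 * R ^ ε))) := by ring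
    _ ≤ _ := by gcongr
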